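/- Let V be a vector space over ℂ and let J : ℚ≥0 → End_ℂ(V) be an additive family of linear operators, meaning J(0) = id and J(α) ∘ J(β) = J(α + β) for all nonnegative rationals α, β. Then for every l ≥ 1, coefficients c : Fin l → ℂ and exponents α : Fin l → ℚ≥0, setting T = Σ_{i} c_i · J(α_i), there exist m ∈ ℕ, coefficients d : Fin m → ℂ, exponents β : Fin m → ℚ≥0, a natural number n and coefficients e : Fin (n+1) → ℂ such that, with T̂ = Σ_{k} d_k · J(β_k), one has T̂ ∘ T = T ∘ T̂ = Σ_{j=0}^{n} e_j · J(j), where in the last sum the arguments j are natural numbers coerced into ℚ≥0. -/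

import Mathlib

open scoped NNRat

/-!
The operators `∑ i, c i • J (α i)` are the images of the elements of the monoid algebra `ℂ[ℚ≥0]`
under the algebra homomorphism `single a 1 ↦ J a`, and those with natural-number exponents are the
images of the polynomials in `single 1 1`. Since `(single a 1) ^ a.den = (single 1 1) ^ a.num`, the
algebra `ℂ[ℚ≥0]` is integral over these polynomials. For an integral element `s`, moving the
constant term of its minimal polynomial to the other side and factoring out `s` exhibits a multiple
of `s` in the base ring; the multiplier is a monic polynomial in `s` of smaller degree, hence
nonzero.

The empty sum `T̂ = 0` would already satisfy the equations. The conditions `d ≠ 0` and `β.Injective`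
of `additive_family_reduction_to_natural_orders_general` exclude it: they say that `T̂` is the image
of a nonzero element of the monoid algebra.
-/

section ReductionToPowers

open Polynomial
open AddMonoidAlgebra (lift lift_single single single_pow)
open scoped AddMonoidAlgebra

lemma monic_divX {B : Type*} [Semiring B] {p : B[X]} (hp : p.Monic) (hdegree : 0 < p.natDegree) :
    p.divX.Monic := by
  rw [Monic, leadingCoeff, natDegree_divX_eq_natDegree_tsub_one, coeff_divX,
    Nat.sub_add_cancel hdegree]
  exact hp

lemma exists_ne_zero_mul_eq_map_of_isIntegralElem {B S : Type*} [CommRing B] [CommRing S]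
    [Nontrivial S] {f : B →+* S} {s : S} (hs : f.IsIntegralElem s) :
    ∃ t ≠ 0, ∃ b, t * s = f b := by
  algebraize [f]
  have hs : IsIntegral B s := hs
  have : Nontrivial B := f.domain_nontrivial
  let p := minpoly B s
  have hmonic : p.divX.Monic := monic_divX (minpoly.monic hs) (minpoly.natDegree_pos hs)
  have hdegree : p.divX.degree < p.degree := degree_divX_lt (minpoly.ne_zero hs)
  have haeval : aeval s p.divX ≠ 0 := fun h ↦ (minpoly.min B s hmonic h).not_gt hdegree
  have hroot : aeval s p.divX * s + f (p.coeff 0) = 0 := calc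
    _ = aeval s (p.divX * X + C (p.coeff 0)) := by
      rw [map_add, map_mul, aeval_X, aeval_C, RingHom.algebraMap_toAlgebra]
    _ = 0 := by rw [divX_mul_X_add, minpoly.aeval]
  exact ⟨_, haeval, -p.coeff 0, by rw [map_neg, eq_neg_of_add_eq_zero_left hroot]⟩

section Lift

variable {R A M : Type*} [CommSemiring R] [Semiring A] [Algebra R A] [AddMonoid M]

lemma lift_aeval_single (F : Multiplicative M →* A) (u : M) (h : R[X]) :
    lift R A M F (aeval (single u 1) h) =
      ∑ j : Fin (h.natDegree + 1), h.coeff j • F (.ofAdd ((j : ℕ) • u)) := by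
  calc lift R A M F (aeval (single u 1) h)
    _ = aeval (F (.ofAdd u)) h := by rw [← aeval_algHom_apply, lift_single, one_smul]
    _ = ∑ j : Fin (h.natDegree + 1), h.coeff j • F (.ofAdd u) ^ (j : ℕ) := by
      rw [aeval_eq_sum_range, Finset.sum_range]
    _ = _ := by simp only [ofAdd_nsmul, map_pow]

lemma exists_lift_eq_sum_of_ne_zero {g : R[M]} (hg : g ≠ 0) (F : Multiplicative M →* A) :
    ∃ (m : ℕ) (d : Fin m → R) (β : Fin m → M), d ≠ 0 ∧ β.Injective ∧
      lift R A M F g = ∑ k, d k • F (.ofAdd (β k)) := by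
  let enum := g.coeff.support.equivFin.symm
  obtain ⟨a, ha⟩ : g.coeff.support.Nonempty := by
    simpa [Finsupp.support_nonempty_iff] using hg
  refine ⟨_, fun k ↦ g.coeff (enum k), fun k ↦ enum k, ?_,
    Subtype.val_injective.comp enum.injective, ?_⟩
  · intro hd
    exact Finsupp.mem_support_iff.mp ha (by simpa using congrFun hd (enum.symm ⟨a, ha⟩))
  · rw [AddMonoidAlgebra.lift_apply, Finsupp.sum, ← Finset.sum_coe_sort, ← enum.sum_comp]

end Lift

variable {R A M : Type*} [CommRing R] [Semiring A] [Algebra R A] [AddCommMonoid M]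

lemma isIntegral_aeval_single {u : M} (hu : ∀ a : M, ∃ k > 0, ∃ n : ℕ, k • a = n • u) :
    (aeval (R := R) (single u 1 : R[M])).toRingHom.IsIntegral := by
  intro x
  induction x using AddMonoidAlgebra.induction_linear with
  | zero => exact RingHom.isIntegralElem_zero _
  | add x y hx hy => exact hx.add _ hy
  | single a r =>
    obtain ⟨k, hk, n, hkn⟩ := hu a
    have hpow : single a r ^ k = aeval (single u 1 : R[M]) (C (r ^ k) * X ^ n) := by
      simp [single_pow, hkn]
    algebraize [(aeval (R := R) (single u 1 : R[M])).toRingHom]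
    refine IsIntegral.of_pow hk ?_
    rw [hpow]
    exact RingHom.isIntegralElem_map _

lemma exists_ne_zero_mul_eq_aeval_single [Nontrivial R] {u : M}
    (hu : ∀ a : M, ∃ k > 0, ∃ n : ℕ, k • a = n • u) (f : R[M]) :
    ∃ g ≠ 0, ∃ h : R[X], g * f = aeval (single u 1) h :=
  exists_ne_zero_mul_eq_map_of_isIntegralElem (isIntegral_aeval_single hu f)

theorem additive_family_reduction_to_natural_orders_general [Nontrivial R] {u : M}
    (hu : ∀ a : M, ∃ k > 0, ∃ n : ℕ, k • a = n • u) {J : M → A} (hJ0 : J 0 = 1)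
    (hJadd : ∀ a b : M, J a * J b = J (a + b)) {ι : Type*} [Fintype ι] (c : ι → R) (α : ι → M) :
    ∃ (m : ℕ) (d : Fin m → R) (β : Fin m → M) (n : ℕ) (e : Fin (n + 1) → R),
      d ≠ 0 ∧ β.Injective ∧
        (∑ k, d k • J (β k)) * (∑ i, c i • J (α i))
          = (∑ i, c i • J (α i)) * (∑ k, d k • J (β k)) ∧
        (∑ k, d k • J (β k)) * (∑ i, c i • J (α i)) = ∑ j, e j • J ((j : ℕ) • u) := by
  let F : Multiplicative M →* A :=
    { toFun a := J a.toAdd, map_one' := hJ0, map_mul' a b := (hJadd a.toAdd b.toAdd).symm }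
  let f : R[M] := ∑ i, single (α i) (c i)
  have hf_lift : lift R A M F f = ∑ i, c i • J (α i) := by
    simp only [f, map_sum, lift_single]
    rfl
  obtain ⟨g, hg, h, hgf⟩ := exists_ne_zero_mul_eq_aeval_single hu f
  obtain ⟨m, d, β, hd, hβ, hlift⟩ := exists_lift_eq_sum_of_ne_zero hg F
  have hg_lift : ∑ k, d k • J (β k) = lift R A M F g := hlift.symm
  refine ⟨m, d, β, h.natDegree, fun j ↦ h.coeff j, hd, hβ, ?_, ?_⟩
  · rw [hg_lift, ← hf_lift, ← map_mul, ← map_mul, mul_comm]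
  · rw [hg_lift, ← hf_lift, ← map_mul, hgf, lift_aeval_single]
    rfl

end ReductionToPowers

lemma nnrat_exists_pos_nsmul_eq_nsmul_one (a : ℚ≥0) : ∃ k > 0, ∃ n : ℕ, k • a = n • (1 : ℚ≥0) :=
  ⟨a.den, a.den_pos, a.num, by rw [nsmul_eq_mul, nsmul_one, NNRat.den_mul_eq_num]⟩

/-- Given an additive family `J : ℚ≥0 → End_ℂ(V)` of linear operators on a complex
vector space `V` (`J 0 = id`, `J α ∘ J β = J (α + β)`), every operator
`T = Σ_i c_i • J (α_i)` admits an operator `T̂ = Σ_k d_k • J (β_k)` from the same family such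
that `T̂ ∘ T = T ∘ T̂ = Σ_{j=0}^{n} e_j • J j` with natural-number exponents. -/
theorem additive_family_reduction_to_natural_orders
    (V : Type*) [AddCommGroup V] [Module ℂ V]
    (J : ℚ≥0 → Module.End ℂ V)
    (hJ0 : J 0 = 1)
    (hJadd : ∀ α β : ℚ≥0, J α * J β = J (α + β))
    (l : ℕ) (hl : 1 ≤ l) (c : Fin l → ℂ) (α : Fin l → ℚ≥0) :
    ∃ (m : ℕ) (d : Fin m → ℂ) (β : Fin m → ℚ≥0) (n : ℕ) (e : Fin (n + 1) → ℂ),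
      (∑ k, d k • J (β k)) * (∑ i, c i • J (α i))
          = (∑ i, c i • J (α i)) * (∑ k, d k • J (β k))
        ∧ (∑ k, d k • J (β k)) * (∑ i, c i • J (α i))
          = ∑ j : Fin (n + 1), e j • J ((j : ℕ) : ℚ≥0) := by
  obtain ⟨m, d, β, n, e, -, -, hcomm, hsum⟩ :=
    additive_family_reduction_to_natural_orders_general nnrat_exists_pos_nsmul_eq_nsmul_one
      hJ0 hJadd c α
  exact ⟨m, d, β, n, e, hcomm, by simpa only [nsmul_one] using hsum⟩
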